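/- Let k, ℓ ∈ ℕ and let ψ : [0,∞)^k × (ℝ^d)^ℓ → ℝ be bounded and continuous, and assume sup over s ∈ [0,∞)^k of the bounded-Lipschitz norm ‖ψ(s,·)‖_{bL} is finite (i.e., the functions ψ(s,·) are uniformly bounded and uniformly Lipschitz in the spatial variable). Let μ₀ be a finite Borel measure on ℝ^d with compact support, and let (μ₀⁽ⁿ⁾)ₙ be finite Borel measures on ℝ^d converging weakly to μ₀. Then for every t > 0, (1/n^k) Σ_{0 ≤ r₁ < r₂ < ⋯ < r_k ≤ ⌊nt⌋−1} ∫ ψ(r₁/n,…,r_k/n, x) d(μ₀⁽ⁿ⁾)^⊗ℓ(x) converges, as n → ∞, to ∫₀^t ds_k ∫₀^{s_k} ds_{k−1} ⋯ ∫₀^{s₂} ds₁ ∫ ψ(s₁,…,s_k, x) dμ₀^⊗ℓ(x). -/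

import Mathlib

open MeasureTheory Filter Topology

/-- Integrals against powers of a finite measure, in terms of its normalization. -/
lemma integral_pi_eq_mass_pow_mul {ι X : Type*} [Fintype ι] [Nonempty X] [MeasurableSpace X]
    (ν : FiniteMeasure X) (f : (ι → X) → ℝ) :
    ∫ x, f x ∂(Measure.pi fun _ : ι => (ν : Measure X)) =
      (ν.mass : ℝ) ^ Fintype.card ι *
        ∫ x, f x ∂(Measure.pi fun _ : ι => (ν.normalize : Measure X)) := by
  have key : (Measure.pi fun _ : ι => (ν : Measure X)) =
      (ν.mass ^ Fintype.card ι) • Measure.pi fun _ : ι => (ν.normalize : Measure X) := by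
    refine Measure.pi_eq fun s _ => ?_
    have h : ∀ i, (ν : Measure X) (s i) = ν.mass * (ν.normalize : Measure X) (s i) := fun i => by
      rw [← ν.ennreal_coeFn_eq_coeFn_toMeasure, ν.self_eq_mass_mul_normalize, ENNReal.coe_mul,
        ProbabilityMeasure.ennreal_coeFn_eq_coeFn_toMeasure]
    rw [Measure.coe_nnreal_smul_apply, Measure.pi_pi, Finset.prod_congr rfl fun i _ => h i,
      Finset.prod_mul_distrib]
    simp
  rw [key, integral_smul_nnreal_measure, NNReal.smul_def]
  simp

/-- If finite measures `μₙ` converge weakly to `μ` and `sₙ → s`, then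
`∫ ψ(sₙ, x) dμₙ^⊗ι(x)` converges to `∫ ψ(s, x) dμ^⊗ι(x)` for `ψ` bounded and continuous. -/
lemma tendsto_integral_pi_of_tendsto {ι S X γ : Type*} [Fintype ι] [Nonempty ι]
    [TopologicalSpace S] [SecondCountableTopology S] [TopologicalSpace.PseudoMetrizableSpace S]
    [TopologicalSpace X] [SecondCountableTopology X] [TopologicalSpace.PseudoMetrizableSpace X]
    [MeasurableSpace X] [BorelSpace X] [Nonempty X] {l : Filter γ}
    (ψ : S → (ι → X) → ℝ) (hcont : Continuous fun p : S × (ι → X) => ψ p.1 p.2)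
    {C : ℝ} (hbdd : ∀ s x, |ψ s x| ≤ C)
    {μs : γ → FiniteMeasure X} {μ : FiniteMeasure X} (hμ : Tendsto μs l (𝓝 μ))
    {ss : γ → S} {s : S} (hs : Tendsto ss l (𝓝 s)) :
    Tendsto (fun n => ∫ x, ψ (ss n) x ∂(Measure.pi fun _ : ι => (μs n : Measure X))) l
      (𝓝 (∫ x, ψ s x ∂(Measure.pi fun _ : ι => (μ : Measure X)))) := by
  simp_rw [integral_pi_eq_mass_pow_mul]
  have hmass : Tendsto (fun n => ((μs n).mass : ℝ) ^ Fintype.card ι) l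
      (𝓝 ((μ.mass : ℝ) ^ Fintype.card ι)) :=
    ((NNReal.continuous_coe.tendsto _).comp hμ.mass).pow _
  rcases eq_or_ne μ 0 with rfl | hne
  · have h0 : (((0 : FiniteMeasure X).mass : ℝ)) ^ Fintype.card ι = 0 := by simp
    rw [h0] at hmass ⊢
    rw [zero_mul]
    refine hmass.zero_mul_isBoundedUnder_le (isBoundedUnder_of ⟨C, fun n => ?_⟩)
    have h := norm_integral_le_of_norm_le_const
      (μ := Measure.pi fun _ : ι => ((μs n).normalize : Measure X))
      (f := fun x => ψ (ss n) x) (C := C) (Eventually.of_forall fun x => hbdd (ss n) x)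
    simpa using h
  · refine hmass.mul ?_
    let : MeasurableSpace S := borel S
    have : BorelSpace S := ⟨rfl⟩
    have hnorm := FiniteMeasure.tendsto_normalize_of_tendsto hμ hne
    have hpi : Tendsto (fun n => ProbabilityMeasure.pi fun _ : ι => (μs n).normalize) l
        (𝓝 (ProbabilityMeasure.pi fun _ : ι => μ.normalize)) :=
      (ProbabilityMeasure.continuous_pi.tendsto _).comp (tendsto_pi_nhds.2 fun _ => hnorm)
    have hprod : Tendsto
        (fun n => (diracProba (ss n)).prod (ProbabilityMeasure.pi fun _ : ι => (μs n).normalize)) l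
        (𝓝 ((diracProba s).prod (ProbabilityMeasure.pi fun _ : ι => μ.normalize))) :=
      (ProbabilityMeasure.continuous_prod.tendsto _).comp
        (((continuous_diracProba.tendsto s).comp hs).prodMk_nhds hpi)
    have h := ProbabilityMeasure.tendsto_iff_forall_integral_tendsto.1 hprod
      (BoundedContinuousFunction.ofNormedAddCommGroup _ hcont C fun p => hbdd p.1 p.2)
    have hint : ∀ (a : S) (ν : ProbabilityMeasure (ι → X)),
        ∫ p, ψ p.1 p.2 ∂((diracProba a).prod ν : Measure (S × (ι → X))) =
          ∫ x, ψ a x ∂(ν : Measure (ι → X)) := fun a ν => by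
      change ∫ p, ψ p.1 p.2 ∂((Measure.dirac a).prod (ν : Measure (ι → X))) = _
      rw [Measure.dirac_prod, integral_map (by fun_prop) hcont.aestronglyMeasurable]
    simpa only [BoundedContinuousFunction.coe_ofNormedAddCommGroup, hint,
      ProbabilityMeasure.toMeasure_pi] using h

/-- The half-open cube of side length `1 / n` with lower corner `r / n`. -/
def gridCell {k : ℕ} (n : ℕ) (r : Fin k → ℕ) : Set (Fin k → ℝ) :=
  Set.univ.pi fun i => Set.Ico ((r i : ℝ) / n) (((r i : ℝ) + 1) / n)

lemma mem_gridCell_iff {k n : ℕ} (hn : 0 < n) {r : Fin k → ℕ} {s : Fin k → ℝ} :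
    s ∈ gridCell n r ↔ ∀ i, 0 ≤ s i ∧ ⌊(n : ℝ) * s i⌋₊ = r i := by
  have hn' : (0 : ℝ) < n := by exact_mod_cast hn
  simp only [gridCell, Set.mem_univ_pi, Set.mem_Ico, div_le_iff₀ hn', lt_div_iff₀ hn']
  refine forall_congr' fun i => ⟨fun h => ?_, fun h => ?_⟩
  · have h0 : 0 ≤ s i * n := (Nat.cast_nonneg _).trans h.1
    refine ⟨nonneg_of_mul_nonneg_left h0 hn', ?_⟩
    rw [mul_comm, Nat.floor_eq_iff h0]
    exact h
  · have h0 : 0 ≤ s i * n := mul_nonneg h.1 hn'.le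
    rw [mul_comm, Nat.floor_eq_iff h0] at h
    exact h.2

lemma measurableSet_gridCell {k : ℕ} (n : ℕ) (r : Fin k → ℕ) : MeasurableSet (gridCell n r) :=
  MeasurableSet.univ_pi fun _ => measurableSet_Ico

lemma volume_gridCell {k : ℕ} (n : ℕ) (r : Fin k → ℕ) :
    volume (gridCell n r) = ENNReal.ofReal (1 / (n : ℝ) ^ k) := by
  rw [gridCell, volume_pi_pi, Finset.prod_congr rfl fun i _ => by
    rw [Real.volume_Ico, ← sub_div, add_sub_cancel_left]]
  rw [Finset.prod_const, ← ENNReal.ofReal_pow (by positivity), Finset.card_univ, Fintype.card_fin,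
    div_pow, one_pow]

/-- A sum over grid points, as the integral of a step function. -/
lemma integral_sum_indicator_gridCell {k n : ℕ} {α : Type*} (T : Finset α)
    (r : α → Fin k → ℕ) (a : α → ℝ) :
    ∫ s, ∑ x ∈ T, (gridCell n (r x)).indicator (fun _ => a x) s =
      1 / (n : ℝ) ^ k * ∑ x ∈ T, a x := by
  rw [integral_finsetSum, Finset.mul_sum]
  · refine Finset.sum_congr rfl fun x _ => ?_
    rw [integral_indicator_const _ (measurableSet_gridCell _ _), Measure.real, volume_gridCell,
      ENNReal.toReal_ofReal (by positivity), smul_eq_mul]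
  · intro x _
    refine (integrable_indicator_iff (measurableSet_gridCell _ _)).2 (integrableOn_const ?_)
    rw [volume_gridCell]
    exact ENNReal.ofReal_ne_top

lemma eventually_floor_mul_lt {a b : ℝ} (ha : 0 ≤ a) (hab : a < b) :
    ∀ᶠ n : ℕ in atTop, ⌊(n : ℝ) * a⌋₊ < ⌊(n : ℝ) * b⌋₊ := by
  have h := (tendsto_natCast_atTop_atTop (R := ℝ)).atTop_mul_const (sub_pos.2 hab)
  filter_upwards [h.eventually_ge_atTop 1] with n hn
  rw [← Nat.succ_le_iff, Nat.succ_eq_add_one, ← Nat.floor_add_one (by positivity)]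
  exact Nat.floor_mono (by linarith)

lemma lt_of_floor_mul_lt {n : ℕ} {a b : ℝ} (h : ⌊(n : ℝ) * a⌋₊ < ⌊(n : ℝ) * b⌋₊) : a < b := by
  by_contra! hba
  exact absurd (Nat.floor_mono (mul_le_mul_of_nonneg_left hba n.cast_nonneg)) (not_le.2 h)

/-- Riemann sums over the simplex `0 < s₁ < ⋯ < s_k < t` of a continuously converging sequence of
uniformly bounded functions converge to the integral of the limit. -/
lemma tendsto_simplex_riemann_sum {k : ℕ} {F : ℕ → (Fin k → ℝ) → ℝ} {G : (Fin k → ℝ) → ℝ} {M : ℝ}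
    (hM : ∀ᶠ n in atTop, ∀ s, |F n s| ≤ M)
    (hF : ∀ (ss : ℕ → Fin k → ℝ) (s : Fin k → ℝ), Tendsto ss atTop (𝓝 s) →
      Tendsto (fun n => F n (ss n)) atTop (𝓝 (G s))) (t : ℝ) :
    Tendsto (fun n : ℕ => (1 / (n : ℝ) ^ k) *
          ∑ r ∈ Finset.univ.filter
              (fun r : Fin k → Fin (⌊(n : ℝ) * t⌋₊) => ∀ i j : Fin k, i < j → r i < r j),
            F n (fun i => ((r i : ℕ) : ℝ) / n)) atTop
      (𝓝 (∫ s in {s : Fin k → ℝ | (∀ i j : Fin k, i < j → s i < s j) ∧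
            ∀ i, s i ∈ Set.Ioo 0 t}, G s)) := by
  set A : Set (Fin k → ℝ) := {s | (∀ i j : Fin k, i < j → s i < s j) ∧ ∀ i, s i ∈ Set.Ioo 0 t}
  have hA : MeasurableSet A := by
    have hAeq : A = (⋂ (i : Fin k) (j : Fin k) (_ : i < j), {s : Fin k → ℝ | s i < s j}) ∩
        ⋂ i : Fin k, (fun s : Fin k → ℝ => s i) ⁻¹' Set.Ioo 0 t := by
      ext s
      simp [A]
    rw [hAeq]
    refine MeasurableSet.inter (MeasurableSet.iInter fun i => MeasurableSet.iInter fun j =>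
      MeasurableSet.iInter fun _ => ?_) (MeasurableSet.iInter fun i => ?_)
    · exact measurableSet_lt (measurable_pi_apply i) (measurable_pi_apply j)
    · exact measurable_pi_apply i measurableSet_Ioo
  rw [← integral_indicator hA]
  simp_rw [← integral_sum_indicator_gridCell _
    (fun (r : Fin k → Fin _) i => (r i : ℕ)) fun r => F _ (fun i => ((r i : ℕ) : ℝ) / _)]
  have hstep : ∀ n : ℕ, 0 < n → ∀ (s : Fin k → ℝ)
      (r : Fin k → Fin (⌊(n : ℝ) * t⌋₊)), (∀ i j : Fin k, i < j → r i < r j) →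
      s ∈ gridCell n (fun i => (r i : ℕ)) →
      ∑ r ∈ Finset.univ.filter
          (fun r : Fin k → Fin (⌊(n : ℝ) * t⌋₊) => ∀ i j : Fin k, i < j → r i < r j),
        (gridCell n (fun i => (r i : ℕ))).indicator
          (fun _ => F n (fun i => ((r i : ℕ) : ℝ) / n)) s =
        F n (fun i => (⌊(n : ℝ) * s i⌋₊ : ℝ) / n) := by
    intro n hn s r hr hs
    have hs' := (mem_gridCell_iff hn).1 hs
    rw [Finset.sum_eq_single r]
    · rw [Set.indicator_of_mem hs]
      simp_rw [(hs' _).2]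
    · intro r' _ hne
      refine Set.indicator_of_notMem (fun h => hne ?_) _
      funext i
      exact Fin.ext (((mem_gridCell_iff hn).1 h i).2.symm.trans (hs' i).2)
    · intro h
      exact absurd (Finset.mem_filter.2 ⟨Finset.mem_univ _, hr⟩) h
  have hsupp : ∀ n : ℕ, 0 < n → ∀ (s : Fin k → ℝ)
      (r : Fin k → Fin (⌊(n : ℝ) * t⌋₊)), (∀ i j : Fin k, i < j → r i < r j) →
      s ∈ gridCell n (fun i => (r i : ℕ)) →
      (∀ i j : Fin k, i < j → s i < s j) ∧ ∀ i, s i ∈ Set.Ico 0 t := by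
    intro n hn s r hr hs
    have hs' := (mem_gridCell_iff hn).1 hs
    refine ⟨fun i j hij => lt_of_floor_mul_lt (n := n) ?_,
      fun i => ⟨(hs' i).1, lt_of_floor_mul_lt (n := n) ?_⟩⟩
    · rw [(hs' i).2, (hs' j).2]
      exact hr i j hij
    · rw [(hs' i).2]
      exact (r i).2
  have hzero : ∀ (n : ℕ) (s : Fin k → ℝ),
      (¬ ∃ r : Fin k → Fin (⌊(n : ℝ) * t⌋₊), (∀ i j : Fin k, i < j → r i < r j) ∧
        s ∈ gridCell n (fun i => (r i : ℕ))) →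
      ∑ r ∈ Finset.univ.filter
          (fun r : Fin k → Fin (⌊(n : ℝ) * t⌋₊) => ∀ i j : Fin k, i < j → r i < r j),
        (gridCell n (fun i => (r i : ℕ))).indicator
          (fun _ => F n (fun i => ((r i : ℕ) : ℝ) / n)) s = 0 := by
    intro n s h
    refine Finset.sum_eq_zero fun r hr => Set.indicator_of_notMem (fun hs => h ?_) _
    exact ⟨r, (Finset.mem_filter.1 hr).2, hs⟩
  set box : Set (Fin k → ℝ) := Set.univ.pi fun _ => Set.Ico 0 t
  have hbox : MeasurableSet box := MeasurableSet.univ_pi fun _ => measurableSet_Ico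
  refine tendsto_integral_filter_of_dominated_convergence (box.indicator fun _ => M) ?_ ?_ ?_ ?_
  · refine Eventually.of_forall fun n => Measurable.aestronglyMeasurable ?_
    exact Finset.measurable_sum _ fun r _ =>
      measurable_const.indicator (measurableSet_gridCell _ _)
  · filter_upwards [hM, eventually_gt_atTop 0] with n hMn hn
    refine Eventually.of_forall fun s => ?_
    by_cases h : ∃ r : Fin k → Fin (⌊(n : ℝ) * t⌋₊), (∀ i j : Fin k, i < j → r i < r j) ∧
        s ∈ gridCell n (fun i => (r i : ℕ))
    · obtain ⟨r, hr, hs⟩ := h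
      rw [hstep n hn s r hr hs,
        Set.indicator_of_mem (Set.mem_univ_pi.2 (hsupp n hn s r hr hs).2)]
      exact hMn _
    · rw [hzero n s h, norm_zero]
      exact Set.indicator_nonneg (fun _ _ => (abs_nonneg _).trans (hMn 0)) s
  · refine (integrable_indicator_iff hbox).2 (integrableOn_const ?_)
    rw [volume_pi_pi]
    exact ENNReal.prod_ne_top fun i _ => by simp
  · have hne : ∀ᵐ s : Fin k → ℝ, ∀ i, s i ≠ 0 :=
      ae_all_iff.2 fun i => Measure.ae_eval_ne (μ := fun _ => volume) i 0
    filter_upwards [hne] with s hs0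
    by_cases hs : s ∈ A
    · rw [Set.indicator_of_mem hs]
      have hlim : Tendsto (fun n : ℕ => fun i => (⌊(n : ℝ) * s i⌋₊ : ℝ) / n) atTop (𝓝 s) := by
        refine tendsto_pi_nhds.2 fun i => ?_
        have h := (tendsto_nat_floor_mul_div_atTop (hs.2 i).1.le).comp
          (tendsto_natCast_atTop_atTop (R := ℝ))
        simpa only [Function.comp_def, mul_comm] using h
      refine (hF _ s hlim).congr' ?_
      have hinc : ∀ᶠ n : ℕ in atTop, ∀ i j : Fin k, i < j →
          ⌊(n : ℝ) * s i⌋₊ < ⌊(n : ℝ) * s j⌋₊ := by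
        simp only [eventually_all]
        exact fun i j hij => eventually_floor_mul_lt (hs.2 i).1.le (hs.1 i j hij)
      have hlt : ∀ᶠ n : ℕ in atTop, ∀ i : Fin k, ⌊(n : ℝ) * s i⌋₊ < ⌊(n : ℝ) * t⌋₊ :=
        eventually_all.2 fun i => eventually_floor_mul_lt (hs.2 i).1.le (hs.2 i).2
      filter_upwards [hinc, hlt, eventually_gt_atTop 0] with n hincn hltn hn
      exact (hstep n hn s (fun i => ⟨_, hltn i⟩) (fun i j hij => hincn i j hij)
        ((mem_gridCell_iff hn).2 fun i => ⟨(hs.2 i).1.le, rfl⟩)).symm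
    · rw [Set.indicator_of_notMem hs]
      refine tendsto_const_nhds.congr' ?_
      filter_upwards [eventually_gt_atTop 0] with n hn
      refine (hzero n s ?_).symm
      rintro ⟨r, hr, hsr⟩
      have h := hsupp n hn s r hr hsr
      exact hs ⟨h.1, fun i => ⟨lt_of_le_of_ne (h.2 i).1 (hs0 i).symm, (h.2 i).2⟩⟩

/-- Let `ψ : [0,∞)^k × (ℝ^d)^ℓ → ℝ` be bounded continuous, with
`sup_s ‖ψ(s,·)‖_{bL} < ∞` (uniformly bounded and uniformly Lipschitz in the spatial
variable).  Let `μ₀` be a finite compactly supported Borel measure on `ℝ^d` and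
`μ₀⁽ⁿ⁾ → μ₀` weakly.  Then the simplex Riemann sums
`(1/n^k) Σ_{0 ≤ r₁ < ⋯ < r_k ≤ ⌊nt⌋-1} ∫ ψ(r/n, x) d(μ₀⁽ⁿ⁾)^⊗ℓ(x)` converge to
`∫_{0<s₁<⋯<s_k<t} ∫ ψ(s, x) dμ₀^⊗ℓ(x) ds`. -/
theorem simplex_riemann_sum_weak_convergence (d k ℓ : ℕ)
    (hd : 1 ≤ d) (hk : 1 ≤ k) (hℓ : 1 ≤ ℓ)
    (ψ : (Fin k → NNReal) → (Fin ℓ → EuclideanSpace ℝ (Fin d)) → ℝ)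
    (hcont : Continuous fun p : (Fin k → NNReal) × (Fin ℓ → EuclideanSpace ℝ (Fin d)) =>
      ψ p.1 p.2)
    (C : ℝ) (hbdd : ∀ s x, |ψ s x| ≤ C)
    (K : ℝ) (hlip : ∀ s x y, |ψ s x - ψ s y| ≤ K * dist x y)
    (μ₀ : Measure (EuclideanSpace ℝ (Fin d))) [IsFiniteMeasure μ₀]
    (hsupp : ∃ S : Set (EuclideanSpace ℝ (Fin d)), IsCompact S ∧ μ₀ Sᶜ = 0)
    (μn : ℕ → Measure (EuclideanSpace ℝ (Fin d))) [∀ n, IsFiniteMeasure (μn n)]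
    (hconv : ∀ φ : BoundedContinuousFunction (EuclideanSpace ℝ (Fin d)) ℝ,
      Tendsto (fun n => ∫ x, φ x ∂(μn n)) atTop (𝓝 (∫ x, φ x ∂μ₀)))
    (t : ℝ) (ht : 0 < t) :
    Tendsto (fun n : ℕ =>
        (1 / (n : ℝ) ^ k) *
          ∑ r ∈ Finset.univ.filter
              (fun r : Fin k → Fin (⌊(n : ℝ) * t⌋₊) => ∀ i j : Fin k, i < j → r i < r j),
            ∫ x, ψ (fun i => Real.toNNReal (((r i : ℕ) : ℝ) / n)) x
              ∂(Measure.pi fun _ : Fin ℓ => μn n))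
      atTop
      (𝓝 (∫ s in {s : Fin k → ℝ | (∀ i j : Fin k, i < j → s i < s j) ∧
            ∀ i, s i ∈ Set.Ioo 0 t},
          ∫ x, ψ (fun i => Real.toNNReal (s i)) x
            ∂(Measure.pi fun _ : Fin ℓ => μ₀))) := by
  have : Nonempty (Fin ℓ) := ⟨⟨0, hℓ⟩⟩
  let ν : ℕ → FiniteMeasure (EuclideanSpace ℝ (Fin d)) := fun n => ⟨μn n, inferInstance⟩
  let ν₀ : FiniteMeasure (EuclideanSpace ℝ (Fin d)) := ⟨μ₀, inferInstance⟩
  have hν : Tendsto ν atTop (𝓝 ν₀) := FiniteMeasure.tendsto_iff_forall_integral_tendsto.2 hconv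
  have hC : 0 ≤ C := (abs_nonneg _).trans (hbdd 0 0)
  have hmass : ∀ᶠ n in atTop, ((ν n).mass : ℝ) < ν₀.mass + 1 :=
    ((NNReal.continuous_coe.tendsto _).comp hν.mass).eventually_lt_const (lt_add_one _)
  refine tendsto_simplex_riemann_sum (M := C * ((ν₀.mass : ℝ) + 1) ^ ℓ)
    (F := fun n s => ∫ x, ψ (fun i => Real.toNNReal (s i)) x ∂(Measure.pi fun _ : Fin ℓ => μn n))
    ?_ (fun ss s hs => ?_) t
  · filter_upwards [hmass] with n hn s
    have h := norm_integral_le_of_norm_le_const (μ := Measure.pi fun _ : Fin ℓ => μn n)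
      (f := ψ fun i => Real.toNNReal (s i)) (C := C) (Eventually.of_forall fun x => hbdd _ x)
    refine h.trans (mul_le_mul_of_nonneg_left ?_ hC)
    have hreal : (Measure.pi fun _ : Fin ℓ => μn n).real Set.univ = ((ν n).mass : ℝ) ^ ℓ := by
      rw [Measure.real, Measure.pi_univ, Finset.prod_const, ENNReal.toReal_pow, Finset.card_univ,
        Fintype.card_fin]
      rfl
    rw [hreal]
    exact pow_le_pow_left₀ (NNReal.coe_nonneg _) hn.le ℓ
  · exact tendsto_integral_pi_of_tendsto (ι := Fin ℓ) ψ hcont hbdd hν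
      (((continuous_pi fun i => continuous_real_toNNReal.comp (continuous_apply i)).tendsto s).comp
        hs)
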